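/- arXiv:2301.11532 — 2 statements merged into one kernel-verified Lean document; each statement's English description precedes it below -/
import Mathlib

section
/- Let Y be a random N×N complex matrix with i.i.d. standard complex Gaussian entries. For every fixed N×N complex matrix Z, every x ∈ [0,1], and every 0 ≤ k ≤ N, the expectation E_Y[ f^{=2(N−k)}(√x · Z + √(1−x) · Y) ] = x^{N−k} · f^{=2(N−k)}(Z). -/
open MeasureTheory ProbabilityTheory

/-- The standard complex Gaussian measure on `ℂ`: the distribution of `a + b i`
where `a, b` are independent real Gaussians of mean `0` and variance `1/2`. -/
noncomputable def stdCGaussian : Measure ℂ :=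
  ((gaussianReal 0 (1 / 2)).prod (gaussianReal 0 (1 / 2))).map
    (fun p => (p.1 : ℂ) + (p.2 : ℂ) * Complex.I)

/-- The distribution of an `N×N` random complex matrix with i.i.d. standard
complex Gaussian entries. -/
noncomputable def matrixGaussian (N : ℕ) : Measure (Fin N → Fin N → ℂ) :=
  Measure.pi fun _ : Fin N => Measure.pi fun _ : Fin N => stdCGaussian

/-- `h₂(z) = z * conj z - 1`. -/
noncomputable def h2 (z : ℂ) : ℂ := z * (starRingEnd ℂ) z - 1

/-- The degree-`2(N-k)` part `f^{=2(N-k)}(Z)` of `|Per Z|²`. -/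
noncomputable def fdeg (N k : ℕ) (Z : Fin N → Fin N → ℂ) : ℂ :=
  ∑ R ∈ Finset.powersetCard k (Finset.univ : Finset (Fin N)),
  ∑ R' ∈ Finset.powersetCard k (Finset.univ : Finset (Fin N)),
    (Nat.factorial k : ℂ) *
      ∑ σ' : {i : Fin N // i ∈ Rᶜ} ≃ {i : Fin N // i ∈ R'ᶜ},
      ∑ ρ' : {i : Fin N // i ∈ Rᶜ} ≃ {i : Fin N // i ∈ R'ᶜ},
        ∏ i : {i : Fin N // i ∈ Rᶜ},
          if σ' i = ρ' i then h2 (Z (σ' i) i)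
          else Z (σ' i) i * (starRingEnd ℂ) (Z (ρ' i) i)

open scoped ComplexConjugate

/-!
The noise operator `f ↦ (Z ↦ E_Y f(u Z + v Y))` factors over the entries of the matrix, since these
are independent. On a single entry, since `E y = 0`, `E |y|² = 1` and `|u|² + |v|² = 1`, the
functions `1`, `z`, `conj z` and `h₂(z)` are eigenfunctions, with eigenvalues `1`, `u`, `conj u` and
`|u|²`. Each term of `f^{=2(N-k)}` is a product of such functions over distinct entries: those on
the graph of `σ'` each contribute a factor `u` to the eigenvalue and those on the graph of `ρ'` a
factor `conj u`, so that all terms have the same eigenvalue `|u|^{2(N-k)}`.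
-/

/-- `f` is an eigenfunction with eigenvalue `c` of the noise operator
`f ↦ (z ↦ ∫ y, f (u • z + v • y) ∂μ)`. Integrability is part of the notion because the Bochner
integral of a non-integrable function is `0`. -/
structure IsNoiseEigenfunction {E : Type*} [AddCommMonoid E] [Module ℂ E] [MeasurableSpace E]
    (μ : Measure E) (u v c : ℂ) (f : E → ℂ) : Prop where
  integrable (z : E) : Integrable (fun y => f (u • z + v • y)) μ
  integral_eq (z : E) : ∫ y, f (u • z + v • y) ∂μ = c * f z

namespace IsNoiseEigenfunction

section Module

variable {E : Type*} [AddCommMonoid E] [Module ℂ E] [MeasurableSpace E] {μ : Measure E}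
  {u v c : ℂ}

lemma one [IsProbabilityMeasure μ] : IsNoiseEigenfunction μ u v 1 fun _ => 1 where
  integrable _ := integrable_const 1
  integral_eq _ := by simp

lemma const_mul (a : ℂ) {f : E → ℂ} (hf : IsNoiseEigenfunction μ u v c f) :
    IsNoiseEigenfunction μ u v c fun z => a * f z where
  integrable z := (hf.integrable z).const_mul a
  integral_eq z := by rw [integral_const_mul, hf.integral_eq, mul_left_comm]

lemma sum {ι : Type*} {s : Finset ι} {f : ι → E → ℂ}
    (hf : ∀ i ∈ s, IsNoiseEigenfunction μ u v c (f i)) :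
    IsNoiseEigenfunction μ u v c fun z => ∑ i ∈ s, f i z where
  integrable z := integrable_finsetSum s fun i hi => (hf i hi).integrable z
  integral_eq z := by
    rw [integral_finsetSum s fun i hi => (hf i hi).integrable z, Finset.mul_sum]
    exact Finset.sum_congr rfl fun i hi => (hf i hi).integral_eq z

lemma star {f : E → ℂ} (hf : IsNoiseEigenfunction μ u v c f) :
    IsNoiseEigenfunction μ u v (conj c) fun z => conj (f z) where
  integrable z := memLp_one_iff_integrable.mp (memLp_one_iff_integrable.mpr (hf.integrable z)).star
  integral_eq z := by rw [integral_conj, hf.integral_eq, map_mul]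

end Module

lemma fintype_prod {ι : Type*} [Fintype ι] {E : ι → Type*} [∀ i, AddCommMonoid (E i)]
    [∀ i, Module ℂ (E i)] [∀ i, MeasurableSpace (E i)] {μ : ∀ i, Measure (E i)}
    [∀ i, SigmaFinite (μ i)] {u v : ℂ} {c : ι → ℂ} {f : ∀ i, E i → ℂ}
    (hf : ∀ i, IsNoiseEigenfunction (μ i) u v (c i) (f i)) :
    IsNoiseEigenfunction (Measure.pi μ) u v (∏ i, c i) fun z => ∏ i, f i (z i) where
  integrable z := Integrable.fintype_prod_dep fun i => (hf i).integrable (z i)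
  integral_eq z := by
    simp only [← Finset.prod_mul_distrib, ← (hf _).integral_eq]
    exact integral_fintype_prod_eq_prod fun i y => f i (u • z i + v • y)

end IsNoiseEigenfunction

/-- `ν` has mean `0` and `E |y|² = 1`. The pseudo-variance `E y²` is not constrained. -/
structure IsStandardized (ν : Measure ℂ) : Prop where
  memLp_two : MemLp (fun y => y) 2 ν
  integral_eq_zero : ∫ y, y ∂ν = 0
  integral_mul_conj : ∫ y, y * conj y ∂ν = 1

instance : IsProbabilityMeasure stdCGaussian :=
  Measure.isProbabilityMeasure_map (by fun_prop)

lemma memLp_two_stdCGaussian : MemLp (fun y => y) 2 stdCGaussian := by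
  have hg : MemLp (fun a : ℝ => (a : ℂ)) 2 (gaussianReal 0 (1 / 2)) :=
    (memLp_id_gaussianReal' 2 (by simp)).ofReal
  rw [stdCGaussian, memLp_map_measure_iff (by fun_prop) (by fun_prop)]
  exact (hg.comp_fst _).add ((hg.comp_snd _).mul_const Complex.I)

lemma integral_stdCGaussian : ∫ y, y ∂stdCGaussian = 0 := by
  have hg : Integrable (fun a : ℝ => (a : ℂ)) (gaussianReal 0 (1 / 2)) :=
    ((memLp_id_gaussianReal' 1 (by simp)).integrable le_rfl).ofReal
  have hmean : ∫ a : ℝ, (a : ℂ) ∂(gaussianReal 0 (1 / 2)) = 0 := by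
    rw [integral_complex_ofReal, integral_id_gaussianReal, Complex.ofReal_zero]
  rw [stdCGaussian, integral_map (by fun_prop) (by fun_prop),
    integral_add (hg.comp_fst _) ((hg.comp_snd _).mul_const _), integral_mul_const,
    integral_fun_fst fun a : ℝ => (a : ℂ), integral_fun_snd fun a : ℝ => (a : ℂ), hmean]
  simp

lemma integral_sq_gaussianReal_zero (v : NNReal) : ∫ a, a ^ 2 ∂gaussianReal 0 v = v := by
  have hvar := variance_fun_id_gaussianReal (μ := 0) (v := v)
  rwa [variance_of_integral_eq_zero (by fun_prop) (by simp)] at hvar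

lemma integral_mul_conj_stdCGaussian : ∫ y, y * conj y ∂stdCGaussian = 1 := by
  have hg : Integrable (fun a : ℝ => a ^ 2) (gaussianReal 0 (1 / 2)) :=
    (memLp_id_gaussianReal' 2 (by simp)).integrable_sq
  rw [stdCGaussian, integral_map (by fun_prop) (Continuous.aestronglyMeasurable (by fun_prop))]
  simp only [Complex.mul_conj, Complex.normSq_add_mul_I]
  rw [integral_complex_ofReal, integral_add (hg.comp_fst _) (hg.comp_snd _),
    integral_fun_fst fun a : ℝ => a ^ 2, integral_fun_snd fun a : ℝ => a ^ 2,
    integral_sq_gaussianReal_zero]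
  norm_num

lemma isStandardized_stdCGaussian : IsStandardized stdCGaussian :=
  ⟨memLp_two_stdCGaussian, integral_stdCGaussian, integral_mul_conj_stdCGaussian⟩

lemma h2_mul_add_mul {u v : ℂ} (huv : ‖u‖ ^ 2 + ‖v‖ ^ 2 = 1) (z y : ℂ) :
    h2 (u * z + v * y) = u * conj u * h2 z + v * conj v * h2 y
      + v * conj (u * z) * y + conj v * (u * z) * conj y := by
  have huv' : u * conj u + v * conj v = 1 := by
    rw [Complex.mul_conj', Complex.mul_conj']
    exact_mod_cast huv
  simp only [h2, map_add, map_mul]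
  linear_combination huv'

/-- The factor that a single matrix entry `z` contributes to a product of entries, conjugated
entries and `h2`'s: `p` says whether `z` occurs in it, and `q` whether `conj z` does. -/
noncomputable def wickFactor (p q : Prop) [Decidable p] [Decidable q] (z : ℂ) : ℂ :=
  if p then if q then h2 z else z else if q then conj z else 1

namespace IsStandardized

variable {ν : Measure ℂ}

lemma integrable_mul_conj (hν : IsStandardized ν) : Integrable (fun y => y * conj y) ν :=
  hν.memLp_two.integrable_mul hν.memLp_two.star

variable [IsProbabilityMeasure ν] {u v : ℂ}

lemma integrable (hν : IsStandardized ν) : Integrable (fun y => y) ν :=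
  hν.memLp_two.integrable (by norm_num)

lemma integrable_conj (hν : IsStandardized ν) : Integrable (fun y => conj y) ν :=
  hν.memLp_two.star.integrable (by norm_num)

lemma integrable_h2 (hν : IsStandardized ν) : Integrable h2 ν :=
  hν.integrable_mul_conj.sub (integrable_const 1)

lemma integral_h2 (hν : IsStandardized ν) : ∫ y, h2 y ∂ν = 0 := by
  simp only [h2]
  rw [integral_sub hν.integrable_mul_conj (integrable_const 1), hν.integral_mul_conj]
  simp

lemma isNoiseEigenfunction_id (hν : IsStandardized ν) :
    IsNoiseEigenfunction ν u v u fun z => z where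
  integrable z := (integrable_const _).add (hν.integrable.const_mul v)
  integral_eq z := by
    simp only [smul_eq_mul]
    rw [integral_add (integrable_const _) (hν.integrable.const_mul v),
      integral_const_mul v fun y : ℂ => y, hν.integral_eq_zero]
    simp

lemma isNoiseEigenfunction_h2 (hν : IsStandardized ν) (huv : ‖u‖ ^ 2 + ‖v‖ ^ 2 = 1) :
    IsNoiseEigenfunction ν u v (u * conj u) h2 := by
  have hh2 (z : ℂ) : Integrable (fun y => u * conj u * h2 z + v * conj v * h2 y) ν :=
    (integrable_const _).add (hν.integrable_h2.const_mul _)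
  have hh2_id (z : ℂ) : Integrable (fun y => u * conj u * h2 z + v * conj v * h2 y
      + v * conj (u * z) * y) ν := (hh2 z).add (hν.integrable.const_mul _)
  have hconj (z : ℂ) : Integrable (fun y => conj v * (u * z) * conj y) ν :=
    hν.integrable_conj.const_mul _
  constructor <;> intro z <;> simp only [smul_eq_mul, h2_mul_add_mul huv]
  · exact (hh2_id z).add (hconj z)
  · rw [integral_add (hh2_id z) (hconj z), integral_add (hh2 z) (hν.integrable.const_mul _),
      integral_add (integrable_const _) (hν.integrable_h2.const_mul _), integral_const_mul _ h2,
      integral_const_mul _ fun y : ℂ => y, integral_const_mul _ conj, integral_conj,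
      hν.integral_h2, hν.integral_eq_zero]
    simp

lemma isNoiseEigenfunction_wickFactor (hν : IsStandardized ν) (huv : ‖u‖ ^ 2 + ‖v‖ ^ 2 = 1)
    (p q : Prop) [Decidable p] [Decidable q] :
    IsNoiseEigenfunction ν u v ((if p then u else 1) * if q then conj u else 1)
      (wickFactor p q) := by
  unfold wickFactor
  split_ifs
  · exact hν.isNoiseEigenfunction_h2 huv
  · simpa only [mul_one] using hν.isNoiseEigenfunction_id
  · simpa only [one_mul] using hν.isNoiseEigenfunction_id.star
  · simpa only [one_mul] using IsNoiseEigenfunction.one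

end IsStandardized

lemma prod_wickFactor {ι : Type*} [Fintype ι] [DecidableEq ι] (a b : ι) (w : ι → ℂ) :
    ∏ r, wickFactor (a = r) (b = r) (w r) = if a = b then h2 (w a) else w a * conj (w b) := by
  split_ifs with hab
  · have hfactor (r : ι) :
        wickFactor (a = r) (b = r) (w r) = if a = r then h2 (w r) else 1 := by
      rw [← hab]
      unfold wickFactor
      split_ifs <;> rfl
    simp [hfactor]
  · have hfactor (r : ι) : wickFactor (a = r) (b = r) (w r)
        = (if a = r then w r else 1) * if b = r then conj (w r) else 1 := by
      unfold wickFactor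
      split_ifs with ha hb
      · exact absurd (ha.trans hb.symm) hab
      all_goals simp
    simp only [hfactor, Finset.prod_mul_distrib, Finset.prod_ite_eq, Finset.mem_univ, if_true]

section WickMonomial

variable {m n : Type*}

/-- The entries of an `m × n` matrix lying on the graph of `σ`, which maps columns to rows. -/
def graphEntries {s : Finset n} (σ : s → m) : Finset (m × n) :=
  Finset.univ.map ⟨fun i => (σ i, i), fun _ _ h => Subtype.ext (Prod.ext_iff.mp h).2⟩

lemma card_graphEntries {s : Finset n} (σ : s → m) : (graphEntries σ).card = s.card := by
  simp [graphEntries]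

lemma mem_graphEntries {s : Finset n} {σ : s → m} {r : m} {c : n} :
    (r, c) ∈ graphEntries σ ↔ ∃ hc : c ∈ s, σ ⟨c, hc⟩ = r := by
  simp only [graphEntries, Finset.mem_map, Finset.mem_univ, true_and]
  constructor
  · rintro ⟨i, hi⟩
    obtain ⟨rfl, rfl⟩ := Prod.ext_iff.mp hi
    exact ⟨i.2, rfl⟩
  · rintro ⟨hc, rfl⟩
    exact ⟨⟨c, hc⟩, rfl⟩

variable [Fintype m] [Fintype n] [DecidableEq m] [DecidableEq n]

/-- The Wick-ordered version of `∏ e ∈ P, W e * ∏ e ∈ Q, conj (W e)`, in which `h2 (W e)` replaces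
`W e * conj (W e)` on the common entries. -/
noncomputable def wickMonomial (P Q : Finset (m × n)) (W : m → n → ℂ) : ℂ :=
  ∏ r, ∏ c, wickFactor ((r, c) ∈ P) ((r, c) ∈ Q) (W r c)

lemma isNoiseEigenfunction_wickMonomial {μ : m → n → Measure ℂ}
    [∀ r c, IsProbabilityMeasure (μ r c)] (hμ : ∀ r c, IsStandardized (μ r c)) {u v : ℂ}
    (huv : ‖u‖ ^ 2 + ‖v‖ ^ 2 = 1) (P Q : Finset (m × n)) :
    IsNoiseEigenfunction (Measure.pi fun r => Measure.pi (μ r)) u v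
      (u ^ P.card * conj u ^ Q.card) (wickMonomial P Q) := by
  have heigenvalue : ∏ r, ∏ c, ((if (r, c) ∈ P then u else 1) * if (r, c) ∈ Q then conj u else 1)
      = u ^ P.card * conj u ^ Q.card := by
    simp only [Finset.prod_mul_distrib, ← Fintype.prod_prod_type', Finset.prod_ite_mem,
      Finset.univ_inter, Finset.prod_const]
  rw [← heigenvalue]
  exact .fintype_prod fun r => .fintype_prod fun c =>
    (hμ r c).isNoiseEigenfunction_wickFactor huv _ _

lemma wickMonomial_graphEntries {s : Finset n} (σ ρ : s → m) (W : m → n → ℂ) :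
    wickMonomial (graphEntries σ) (graphEntries ρ) W
      = ∏ i, if σ i = ρ i then h2 (W (σ i) i) else W (σ i) i * conj (W (ρ i) i) := by
  have hcol_one (c : n) (hc : c ∉ s) :
      ∏ r, wickFactor ((r, c) ∈ graphEntries σ) ((r, c) ∈ graphEntries ρ) (W r c) = 1 := by
    simp [mem_graphEntries, hc, wickFactor]
  rw [wickMonomial, Finset.prod_comm,
    ← Finset.prod_subset s.subset_univ fun c _ => hcol_one c, ← Finset.prod_coe_sort]
  simp only [mem_graphEntries, Subtype.coe_eta, Finset.coe_mem, exists_true_left]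
  exact Finset.prod_congr rfl fun i _ => prod_wickFactor (σ i) (ρ i) fun r => W r i

end WickMonomial

lemma fdeg_eq_sum_wickMonomial (N k : ℕ) (W : Fin N → Fin N → ℂ) :
    fdeg N k W = ∑ R ∈ Finset.powersetCard k (Finset.univ : Finset (Fin N)),
      ∑ R' ∈ Finset.powersetCard k (Finset.univ : Finset (Fin N)), (Nat.factorial k : ℂ) *
        ∑ σ : {i // i ∈ Rᶜ} ≃ {i // i ∈ R'ᶜ}, ∑ ρ : {i // i ∈ Rᶜ} ≃ {i // i ∈ R'ᶜ},
          wickMonomial (graphEntries fun i => (σ i : Fin N))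
            (graphEntries fun i => (ρ i : Fin N)) W := by
  simp only [fdeg, wickMonomial_graphEntries, Subtype.ext_iff]

theorem fdeg_noise_eigen_general (N k : ℕ) {μ : Fin N → Fin N → Measure ℂ}
    [∀ i j, IsProbabilityMeasure (μ i j)] (hμ : ∀ i j, IsStandardized (μ i j)) {u v : ℂ} {x : ℝ}
    (hu : ‖u‖ ^ 2 = x) (hv : ‖v‖ ^ 2 = 1 - x) :
    IsNoiseEigenfunction (Measure.pi fun i => Measure.pi (μ i)) u v ((x : ℂ) ^ (N - k))
      (fdeg N k) := by
  have huv : ‖u‖ ^ 2 + ‖v‖ ^ 2 = 1 := by rw [hu, hv, add_sub_cancel]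
  simp only [funext (fdeg_eq_sum_wickMonomial N k)]
  refine .sum fun R hR => .sum fun R' _ => .const_mul _ <| .sum fun σ _ => .sum fun ρ _ => ?_
  have hcard : Rᶜ.card = N - k := by
    rw [Finset.card_compl, Fintype.card_fin, (Finset.mem_powersetCard.mp hR).2]
  have heigenvalue : u ^ Rᶜ.card * conj u ^ Rᶜ.card = (x : ℂ) ^ (N - k) := by
    rw [← mul_pow, Complex.mul_conj', ← Complex.ofReal_pow, hu, hcard]
  simpa only [card_graphEntries, heigenvalue] using isNoiseEigenfunction_wickMonomial hμ huv
    (graphEntries fun i => (σ i : Fin N)) (graphEntries fun i => (ρ i : Fin N))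

/-- For a fixed `N×N` complex matrix `Z`, `x ∈ [0,1]`, `0 ≤ k ≤ N`, and
`Y` a random matrix with i.i.d. standard complex Gaussian entries,
`E_Y[ f^{=2(N−k)}(√x·Z + √(1−x)·Y) ] = x^{N−k} · f^{=2(N−k)}(Z)`. -/
theorem fdeg_noise_eigen (N k : ℕ) (hk : k ≤ N) (Z : Fin N → Fin N → ℂ)
    (x : ℝ) (hx0 : 0 ≤ x) (hx1 : x ≤ 1) :
    ∫ Y, fdeg N k (fun i j => (Real.sqrt x : ℂ) * Z i j + (Real.sqrt (1 - x) : ℂ) * Y i j)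
        ∂(matrixGaussian N)
      = (x : ℂ) ^ (N - k) * fdeg N k Z :=
  (fdeg_noise_eigen_general N k (fun _ _ => isStandardized_stdCGaussian)
    (by simp [Real.sq_sqrt hx0]) (by simp [Real.sq_sqrt, hx1])).integral_eq Z
end

section
/- Let Z be a random N×N complex matrix with i.i.d. standard complex Gaussian entries. For any 0 ≤ k₁, k₂ ≤ N with k₁ ≠ k₂, the expectation E_Z[ f^{=(N−k₁)}(Z) · conj( f^{=(N−k₂)}(Z) ) ] = 0. -/
open MeasureTheory ProbabilityTheory

/-- The degree-`(N−k)` part of `|Per(Z)|²` under partial distinguishability: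
`f^{=(N−k)}(Z) = ∑_{(σ,ρ) : |{i : σ(i)=ρ(i)}| = k} ∏_i Z(σ(i),i) · conj(Z(ρ(i),i))`. -/
noncomputable def fdist (N k : ℕ) (Z : Fin N → Fin N → ℂ) : ℂ :=
  ∑ σρ ∈ Finset.univ.filter
      (fun σρ : Equiv.Perm (Fin N) × Equiv.Perm (Fin N) =>
        (Finset.univ.filter fun i : Fin N => σρ.1 i = σρ.2 i).card = k),
    ∏ i : Fin N, Z (σρ.1 i) i * (starRingEnd ℂ) (Z (σρ.2 i) i)

/-!
Distinct entries of the matrix are independent, so the expectation of a monomial in the entries and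
their conjugates is the product over the entries `(r, c)` of the moments of `z ^ a * conj z ^ b`,
where `a` and `b` are the exponents of `Z r c` and of its conjugate. For a symmetric law such a
moment vanishes as soon as `a + b` is odd. Expanding both sums, a term comes from pairs `(σ, ρ)` and
`(τ, π)` with different numbers of agreements, hence from pairs of which exactly one agrees at some
column `i`. The pair that agrees there contributes an even amount to the degree `a + b` of every
entry of column `i`, while the other pair contributes one to each of two different entries.
-/

open scoped ComplexConjugate

section NegInvariant

variable {G H : Type*} [MeasurableSpace G] [MeasurableSpace H]

theorem isNegInvariant_map_of_odd [Neg G] [MeasurableNeg G] [Neg H] [MeasurableNeg H]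
    {μ : Measure G} [μ.IsNegInvariant] {f : G → H} (hf : Measurable f) (hodd : f.Odd) :
    (μ.map f).IsNegInvariant := by
  have hcomm : Neg.neg ∘ f = f ∘ Neg.neg := funext fun x => (hodd x).symm
  refine ⟨?_⟩
  rw [Measure.neg_def, Measure.map_map measurable_neg hf, hcomm,
    ← Measure.map_map hf measurable_neg, Measure.map_neg_eq_self]

theorem isNegInvariant_prod [Neg G] [MeasurableNeg G] [Neg H] [MeasurableNeg H]
    {μ : Measure G} {ν : Measure H} [SFinite μ] [SFinite ν]
    [μ.IsNegInvariant] [ν.IsNegInvariant] : (μ.prod ν).IsNegInvariant :=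
  ⟨((Measure.measurePreserving_neg μ).prod (Measure.measurePreserving_neg ν)).map_eq⟩

theorem integral_eq_zero_of_odd {E : Type*} [AddGroup G] [MeasurableNeg G]
    [NormedAddCommGroup E] [NormedSpace ℝ E] {μ : Measure G} [μ.IsNegInvariant] {f : G → E}
    (hf : f.Odd) : ∫ x, f x ∂μ = 0 := by
  have : IsAddTorsionFree E := .of_isTorsionFree ℝ E
  have h : ∫ x, f x ∂μ = -∫ x, f x ∂μ := by
    rw [← integral_neg, ← integral_neg_eq_self]
    simp only [hf _]
  exact self_eq_neg.mp h

end NegInvariant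

section MixedMoment

variable {𝕜 : Type*} [RCLike 𝕜]

theorem odd_pow_mul_conj_pow {a b : ℕ} (h : Odd (a + b)) :
    (fun z : 𝕜 => z ^ a * conj z ^ b).Odd := fun z => by
  dsimp only
  rw [map_neg, neg_pow z, neg_pow (conj z), mul_mul_mul_comm, ← pow_add, h.neg_one_pow,
    neg_one_mul]

theorem integrable_pow_mul_conj_pow {ν : Measure 𝕜} [IsFiniteMeasure ν] {p a b : ℕ}
    (hν : MemLp id p ν) (h : a + b ≤ p) : Integrable (fun z : 𝕜 => z ^ a * conj z ^ b) ν := by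
  have hnorm : Integrable (fun z : 𝕜 => ‖z‖ ^ (a + b)) ν :=
    (hν.mono_exponent (Nat.cast_le.mpr h)).integrable_norm_pow'
  have hcont : Continuous fun z : 𝕜 => z ^ a * conj z ^ b :=
    (continuous_pow a).mul (RCLike.continuous_conj.pow b)
  refine hnorm.mono' hcont.aestronglyMeasurable (.of_forall fun z => ?_)
  rw [norm_mul, norm_pow, norm_pow, RCLike.norm_conj, pow_add]

end MixedMoment

section MixedMonomial

variable {m n 𝕜 : Type*} [Fintype m] [Fintype n] [RCLike 𝕜]

/-- The monomial `∏_{r,c} Z(r,c) ^ A(r,c) · conj(Z(r,c)) ^ B(r,c)` in the entries of a matrix and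
their conjugates, with matrices of exponents `A` and `B`. -/
def mixedMonomial (A B : m → n → ℕ) (Z : m → n → 𝕜) : 𝕜 :=
  ∏ r, ∏ c, Z r c ^ A r c * conj (Z r c) ^ B r c

theorem mixedMonomial_mul_mixedMonomial (A B A' B' : m → n → ℕ) (Z : m → n → 𝕜) :
    mixedMonomial A B Z * mixedMonomial A' B' Z = mixedMonomial (A + A') (B + B') Z := by
  simp only [mixedMonomial, ← Finset.prod_mul_distrib, Pi.add_apply, pow_add, mul_mul_mul_comm]

theorem conj_mixedMonomial (A B : m → n → ℕ) (Z : m → n → 𝕜) :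
    conj (mixedMonomial A B Z) = mixedMonomial B A Z := by
  simp only [mixedMonomial, map_prod, map_mul, map_pow, RCLike.conj_conj, mul_comm]

variable {ν : m → n → Measure 𝕜} {A B : m → n → ℕ}

theorem integrable_mixedMonomial [∀ r c, IsFiniteMeasure (ν r c)] {p : ℕ}
    (hν : ∀ r c, MemLp id p (ν r c)) (h : ∀ r c, A r c + B r c ≤ p) :
    Integrable (mixedMonomial A B) (Measure.pi fun r => Measure.pi (ν r)) :=
  Integrable.fintype_prod_dep fun r => Integrable.fintype_prod_dep fun c =>
    integrable_pow_mul_conj_pow (hν r c) (h r c)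

theorem integral_mixedMonomial [∀ r c, SigmaFinite (ν r c)] :
    ∫ Z, mixedMonomial A B Z ∂(Measure.pi fun r => Measure.pi (ν r)) =
      ∏ r, ∏ c, ∫ z, z ^ A r c * conj z ^ B r c ∂(ν r c) := by
  simp only [mixedMonomial]
  rw [integral_fintype_prod_eq_prod
    fun r (x : n → 𝕜) => ∏ c, x c ^ A r c * conj (x c) ^ B r c]
  exact Finset.prod_congr rfl fun r _ =>
    integral_fintype_prod_eq_prod fun c z => z ^ A r c * conj z ^ B r c

theorem integral_mixedMonomial_eq_zero_of_odd [∀ r c, SigmaFinite (ν r c)] {r : m} {c : n}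
    [(ν r c).IsNegInvariant] (h : Odd (A r c + B r c)) :
    ∫ Z, mixedMonomial A B Z ∂(Measure.pi fun r => Measure.pi (ν r)) = 0 := by
  rw [integral_mixedMonomial]
  refine Finset.prod_eq_zero (Finset.mem_univ r) (Finset.prod_eq_zero (Finset.mem_univ c) ?_)
  exact integral_eq_zero_of_odd (odd_pow_mul_conj_pow h)

end MixedMonomial

section Incidence

variable {m n 𝕜 : Type*} [DecidableEq m]

/-- The `0`-`1` matrix of the graph of `σ`, with a one in position `(σ c, c)` for each column `c`;
it is the matrix of exponents of the monomial `∏_c Z(σ(c),c)`. -/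
def incidence (σ : n → m) (r : m) (c : n) : ℕ := if σ c = r then 1 else 0

theorem incidence_le_one (σ : n → m) (r : m) (c : n) : incidence σ r c ≤ 1 := by
  unfold incidence
  split_ifs <;> simp

theorem prod_mul_conj_eq_mixedMonomial [Fintype m] [Fintype n] [RCLike 𝕜] (σ ρ : n → m)
    (Z : m → n → 𝕜) :
    ∏ c, Z (σ c) c * conj (Z (ρ c) c) = mixedMonomial (incidence σ) (incidence ρ) Z := by
  simp only [mixedMonomial, incidence, pow_ite, pow_one, pow_zero]
  rw [Finset.prod_comm]
  simp only [Finset.prod_mul_distrib, Finset.prod_ite_eq, Finset.mem_univ, if_true]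

theorem odd_incidence_add_incidence {σ ρ : n → m} {c : n} (h : σ c ≠ ρ c) :
    Odd (incidence σ (σ c) c + incidence ρ (σ c) c) := by
  simp only [incidence, if_true, if_neg h.symm, add_zero, odd_one]

theorem even_incidence_add_incidence {σ ρ : n → m} {c : n} (h : σ c = ρ c) (r : m) :
    Even (incidence σ r c + incidence ρ r c) := by
  simp only [incidence, h, Even.add_self]

theorem exists_odd_incidence {σ ρ τ π : n → m} {c : n} (h : ¬(σ c = ρ c ↔ τ c = π c)) :
    ∃ r, Odd (incidence σ r c + incidence ρ r c + (incidence τ r c + incidence π r c)) := by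
  by_cases hσρ : σ c = ρ c
  · have hτπ : τ c ≠ π c := fun hτπ => h (iff_of_true hσρ hτπ)
    exact ⟨τ c, (even_incidence_add_incidence hσρ _).add_odd (odd_incidence_add_incidence hτπ)⟩
  · have hτπ : τ c = π c := by_contra fun hτπ => h (iff_of_false hσρ hτπ)
    exact ⟨σ c, (odd_incidence_add_incidence hσρ).add_even (even_incidence_add_incidence hτπ _)⟩

end Incidence

/-- The pairs of permutations summed over in `fdist`: those agreeing at exactly `k` points. -/
def agreeingPairs (N k : ℕ) : Finset (Equiv.Perm (Fin N) × Equiv.Perm (Fin N)) :=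
  Finset.univ.filter fun p => (Finset.univ.filter fun i => p.1 i = p.2 i).card = k

theorem exists_not_iff_of_mem_agreeingPairs {N k₁ k₂ : ℕ} (hne : k₁ ≠ k₂)
    {p q : Equiv.Perm (Fin N) × Equiv.Perm (Fin N)}
    (hp : p ∈ agreeingPairs N k₁) (hq : q ∈ agreeingPairs N k₂) :
    ∃ i, ¬(p.1 i = p.2 i ↔ q.1 i = q.2 i) := by
  by_contra! h
  apply hne
  rw [← (Finset.mem_filter.mp hp).2, ← (Finset.mem_filter.mp hq).2]
  simp only [h]

theorem fdist_eq_sum_mixedMonomial (N k : ℕ) (Z : Fin N → Fin N → ℂ) :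
    fdist N k Z = ∑ p ∈ agreeingPairs N k, mixedMonomial (incidence p.1) (incidence p.2) Z :=
  Finset.sum_congr rfl fun p _ => prod_mul_conj_eq_mixedMonomial p.1 p.2 Z

theorem fdist_mul_conj_fdist (N k₁ k₂ : ℕ) (Z : Fin N → Fin N → ℂ) :
    fdist N k₁ Z * conj (fdist N k₂ Z) =
      ∑ p ∈ agreeingPairs N k₁, ∑ q ∈ agreeingPairs N k₂,
        mixedMonomial (incidence p.1 + incidence q.2) (incidence p.2 + incidence q.1) Z := by
  simp only [fdist_eq_sum_mixedMonomial, map_sum, Finset.sum_mul_sum, conj_mixedMonomial,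
    mixedMonomial_mul_mixedMonomial]

theorem fdist_orthogonal_general {N k₁ k₂ : ℕ} (hne : k₁ ≠ k₂) (ν : Fin N → Fin N → Measure ℂ)
    [∀ r c, IsFiniteMeasure (ν r c)] [∀ r c, (ν r c).IsNegInvariant]
    (hν : ∀ r c, MemLp id 4 (ν r c)) :
    ∫ Z, fdist N k₁ Z * conj (fdist N k₂ Z) ∂(Measure.pi fun r => Measure.pi (ν r)) = 0 := by
  have hint (p q : Equiv.Perm (Fin N) × Equiv.Perm (Fin N)) :
      Integrable (mixedMonomial (incidence p.1 + incidence q.2) (incidence p.2 + incidence q.1))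
        (Measure.pi fun r => Measure.pi (ν r)) :=
    integrable_mixedMonomial (p := 4) hν fun r c =>
      add_le_add (add_le_add (incidence_le_one _ r c) (incidence_le_one _ r c))
        (add_le_add (incidence_le_one _ r c) (incidence_le_one _ r c))
  simp only [fdist_mul_conj_fdist]
  rw [integral_finsetSum _ fun p _ => integrable_finsetSum _ fun q _ => hint p q]
  refine Finset.sum_eq_zero fun p hp => ?_
  rw [integral_finsetSum _ fun q _ => hint p q]
  refine Finset.sum_eq_zero fun q hq => ?_
  obtain ⟨i, hi⟩ := exists_not_iff_of_mem_agreeingPairs hne hp hq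
  obtain ⟨r, hr⟩ := exists_odd_incidence hi
  refine integral_mixedMonomial_eq_zero_of_odd (r := r) (c := i) ?_
  simpa only [Pi.add_apply, add_comm (incidence q.1 r i), add_add_add_comm] using hr

section StdCGaussian

instance isProbabilityMeasure_stdCGaussian : IsProbabilityMeasure stdCGaussian :=
  Measure.isProbabilityMeasure_map (by fun_prop)

instance isNegInvariant_gaussianReal_zero (v : NNReal) : (gaussianReal 0 v).IsNegInvariant :=
  ⟨gaussianReal_map_neg.trans (by rw [neg_zero])⟩

instance isNegInvariant_stdCGaussian : stdCGaussian.IsNegInvariant :=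
  have := isNegInvariant_prod (μ := gaussianReal 0 (1 / 2)) (ν := gaussianReal 0 (1 / 2))
  isNegInvariant_map_of_odd (by fun_prop) fun p => by
    simp only [Prod.fst_neg, Prod.snd_neg, Complex.ofReal_neg, neg_mul, neg_add]

theorem memLp_id_stdCGaussian (p : NNReal) : MemLp id p stdCGaussian := by
  rw [stdCGaussian, memLp_map_measure_iff (by fun_prop) (by fun_prop)]
  have hre := ((memLp_id_gaussianReal (μ := 0) (v := 1 / 2) p).ofReal (K := ℂ)).comp_fst
    (gaussianReal 0 (1 / 2))
  have him := ((memLp_id_gaussianReal (μ := 0) (v := 1 / 2) p).ofReal (K := ℂ)).comp_snd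
    (gaussianReal 0 (1 / 2))
  exact hre.add (him.mul_const Complex.I)

end StdCGaussian

/-- For a random `N×N` matrix `Z` with i.i.d. standard complex Gaussian
entries and `k₁ ≠ k₂` with `k₁, k₂ ≤ N`,
`E_Z[ f^{=(N−k₁)}(Z) · conj(f^{=(N−k₂)}(Z)) ] = 0`. -/
theorem fdist_orthogonal (N k₁ k₂ : ℕ) (hk₁ : k₁ ≤ N) (hk₂ : k₂ ≤ N) (hne : k₁ ≠ k₂) :
    ∫ Z, fdist N k₁ Z * (starRingEnd ℂ) (fdist N k₂ Z) ∂(matrixGaussian N) = 0 :=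
  fdist_orthogonal_general hne _ fun _ _ => memLp_id_stdCGaussian 4
end
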